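/- For every integer m with 0 ≤ m ≤ 3 there exists a constant C > 0 such that for all t > 0 and all (x, y, z) ∈ ℝ³: |x^{2m} G₂(t, x, y, z)| ≤ C e^{−ε t} t^{−3/4} (1 + (A t)⁴)^{−1/4} · t^{m/2} (1 + (A t)⁴)^{m/2}, and |y^{2m} G₂(t, x, y, z)| + |z^{2m} G₂(t, x, y, z)| ≤ C e^{−ε t} t^{−3/4} (1 + (A t)⁴)^{−1/4} · t^{m/2}. -/

import Mathlib

/-!
The Fourier symbol `Ĝ₂` is the exponential of a polynomial in the frequencies, so the integral over
each frequency can be moved to a parallel line in the complex plane. Shifting one frequency by `iR`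
produces the factor `e^{-R|x|}` (or the same with `y`, `z`), and `|x|^{2m} e^{-R|x|} ≤ (2m)! R^{-2m}`
converts it into the polynomial weight: the claim is the choice `R = (t(1 + (At)⁴))^{-1/4}` for `ξ`
and `R = t^{-1/4}` for `η` and `ζ`.

For a frequency vector `r + iw` with `r, w` real, `v = |r|² - |w|² + 2i r·w`, whence
`Re (v - 4v²) ≤ |r|² - 4|r|⁴ + 24|r|²|w|²` (`symbol_re_bound`). Since `V - 4V² ≤ 1/16`, the gap
`δ = κ - 1/16 - ε > 0` allows this to be bounded by `1/16 + δ - c|r|⁴ + C|w|⁴` (`scalar_bound`).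
The values of `R` above are those for which `∫₀ᵗ |w|⁴ ds` stays bounded uniformly in `t`. Finally
`∫₀ᵗ |r|⁴ ds ≥ t(1 + (At)⁴)ξ⁴/80 + t(η + Aξt/2)⁴ + tζ⁴` (`quartic_integral_lower`), and after
undoing the shear the integral of the resulting quartic Gaussian is a constant times
`t^{-3/4}(1 + (At)⁴)^{-1/4}` (`quarticDom_integral`).
-/

open MeasureTheory

/-- The symbol `v(s; ξ, η, ζ) = ξ² + (η + A ξ s)² + ζ²`. -/
noncomputable def vA (A ξ η ζ s : ℝ) : ℝ := ξ ^ 2 + (η + A * ξ * s) ^ 2 + ζ ^ 2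

/-- The spectral Green's function `Ĝ₂`. -/
noncomputable def Ghat2 (A κ t ξ η ζ : ℝ) : ℝ :=
  Real.exp (∫ s in (0:ℝ)..t, (vA A ξ η ζ s - κ - 4 * vA A ξ η ζ s ^ 2))

/-- The physical-space kernel `G₂(t, x, y, z) = ∫_{ℝ³} e^{i(xξ+yη+zζ)} Ĝ₂ dξ dη dζ`. -/
noncomputable def G2 (A κ t x y z : ℝ) : ℂ :=
  ∫ q : ℝ × ℝ × ℝ,
    Complex.exp (Complex.I * ((x * q.1 + y * q.2.1 + z * q.2.2 : ℝ) : ℂ)) *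
      (Ghat2 A κ t q.1 q.2.1 q.2.2 : ℂ)

/-! ### Quartic Gaussians and the dominating function -/

lemma exp_neg_quartic_integrable : Integrable (fun u : ℝ => Real.exp (-u ^ 4)) := by
  refine ((integrable_exp_neg_mul_sq (b := 1) one_pos).const_mul (Real.exp 1)).mono'
    (by fun_prop) (Filter.Eventually.of_forall fun u => ?_)
  rw [Real.norm_eq_abs, abs_of_pos (Real.exp_pos _), ← Real.exp_add]
  apply Real.exp_le_exp.mpr
  nlinarith [sq_nonneg (u ^ 2 - 1), sq_nonneg u]

/-- `quarticMass = ∫ exp(-u⁴) du`. -/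
noncomputable def quarticMass : ℝ := ∫ u : ℝ, Real.exp (-u ^ 4)

lemma quarticMass_pos : 0 < quarticMass :=
  integral_exp_pos (f := fun u : ℝ => -u ^ 4) exp_neg_quartic_integrable

lemma rpow_quarter_pow {p : ℝ} (hp : 0 < p) : (p ^ (1 / 4 : ℝ)) ^ 4 = p := by
  rw [← Real.rpow_natCast, ← Real.rpow_mul hp.le]
  norm_num

lemma exp_quartic_rescale {p : ℝ} (hp : 0 < p) :
    (fun u : ℝ => Real.exp (-p * u ^ 4)) =
      fun u => (fun v : ℝ => Real.exp (-v ^ 4)) (p ^ (1 / 4 : ℝ) * u) := by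
  funext u
  simp only [mul_pow, rpow_quarter_pow hp, neg_mul]

lemma integrable_exp_quartic {p : ℝ} (hp : 0 < p) :
    Integrable (fun u : ℝ => Real.exp (-p * u ^ 4)) := by
  rw [exp_quartic_rescale hp]
  exact exp_neg_quartic_integrable.comp_mul_left' (Real.rpow_pos_of_pos hp _).ne'

lemma integral_exp_quartic {p : ℝ} (hp : 0 < p) :
    ∫ u : ℝ, Real.exp (-p * u ^ 4) = p ^ (-(1 / 4) : ℝ) * quarticMass := by
  rw [exp_quartic_rescale hp, Measure.integral_comp_mul_left (fun v : ℝ => Real.exp (-v ^ 4)),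
    Real.rpow_neg hp.le, abs_of_pos (inv_pos.mpr (Real.rpow_pos_of_pos hp _)), smul_eq_mul,
    quarticMass]

lemma exp_quartic_tendsto {p : ℝ} (hp : 0 < p) (d : ℝ) :
    Filter.Tendsto (fun u : ℝ => Real.exp (-p * (u + d) ^ 4)) Filter.atTop (nhds 0) ∧
    Filter.Tendsto (fun u : ℝ => Real.exp (-p * (-u + d) ^ 4)) Filter.atTop (nhds 0) := by
  have key : ∀ v : ℝ → ℝ, Filter.Tendsto v Filter.atTop Filter.atTop →
      Filter.Tendsto (fun u : ℝ => Real.exp (-p * (v u) ^ 4)) Filter.atTop (nhds 0) := by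
    intro v hv
    refine Real.tendsto_exp_atBot.comp ?_
    exact ((Filter.tendsto_pow_atTop (by norm_num : (4 : ℕ) ≠ 0)).comp hv).const_mul_atTop_of_neg
      (by linarith)
  refine ⟨key _ (Filter.tendsto_atTop_add_const_right _ _ Filter.tendsto_id), ?_⟩
  have h := key (fun u => u + -d) (Filter.tendsto_atTop_add_const_right _ _ Filter.tendsto_id)
  refine h.congr fun u => ?_
  congr 2
  ring

/-- The sheared product of quartic Gaussians that dominates the symbol, where `p`, `q` are decay
rates and `a` is the shear. -/
noncomputable def quarticDom (p q a : ℝ) (w : ℝ × ℝ × ℝ) : ℝ :=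
  Real.exp (-p * w.1 ^ 4) *
    (Real.exp (-q * (w.2.1 + a * w.1) ^ 4) * Real.exp (-q * w.2.2 ^ 4))

lemma shear_measurePreserving (a : ℝ) :
    MeasurePreserving (fun w : ℝ × ℝ × ℝ => (w.1, (w.2.1 + a * w.1, w.2.2))) := by
  refine MeasurePreserving.skew_product (f := id)
    (g := fun (s : ℝ) (r : ℝ × ℝ) => (r.1 + a * s, r.2)) (MeasurePreserving.id _) ?_ ?_
  · unfold Function.uncurry
    fun_prop
  · refine Filter.Eventually.of_forall fun s => ?_
    exact ((measurePreserving_add_right (volume : Measure ℝ) (a * s)).prod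
      (MeasurePreserving.id (volume : Measure ℝ))).map_eq

lemma quarticDom_pair_integrable {q : ℝ} (hq : 0 < q) (d : ℝ) :
    Integrable (fun r : ℝ × ℝ => Real.exp (-q * (r.1 + d) ^ 4) * Real.exp (-q * r.2 ^ 4)) :=
  ((integrable_exp_quartic hq).comp_add_right d).mul_prod (integrable_exp_quartic hq)

lemma quarticDom_integrable {p q : ℝ} (hp : 0 < p) (hq : 0 < q) (a : ℝ) :
    Integrable (quarticDom p q a) := by
  have h := (integrable_exp_quartic hp).mul_prod
    ((integrable_exp_quartic hq).mul_prod (integrable_exp_quartic hq))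
  exact ((shear_measurePreserving a).integrable_comp h.aestronglyMeasurable).mpr h

lemma quarticDom_integral {p q : ℝ} (hp : 0 < p) (hq : 0 < q) (a : ℝ) :
    ∫ w, quarticDom p q a w =
      (p ^ (-(1 / 4) : ℝ) * quarticMass) *
        ((q ^ (-(1 / 4) : ℝ) * quarticMass) * (q ^ (-(1 / 4) : ℝ) * quarticMass)) := by
  have h := (integrable_exp_quartic hp).mul_prod
    ((integrable_exp_quartic hq).mul_prod (integrable_exp_quartic hq))
  have hm := shear_measurePreserving a
  have e := integral_map (μ := (volume : Measure (ℝ × ℝ × ℝ))) hm.measurable.aemeasurable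
    (by rw [hm.map_eq]; exact h.aestronglyMeasurable)
  rw [hm.map_eq] at e
  have e2 : ∫ w, quarticDom p q a w = _ := e.symm
  rw [e2, ← integral_exp_quartic hp, ← integral_exp_quartic hq]
  have e3 := integral_prod_mul (μ := (volume : Measure ℝ)) (ν := (volume : Measure (ℝ × ℝ)))
    (fun u : ℝ => Real.exp (-p * u ^ 4))
    (fun r : ℝ × ℝ => Real.exp (-q * r.1 ^ 4) * Real.exp (-q * r.2 ^ 4))
  have e4 := integral_prod_mul (μ := (volume : Measure ℝ)) (ν := (volume : Measure ℝ))
    (fun u : ℝ => Real.exp (-q * u ^ 4)) (fun u : ℝ => Real.exp (-q * u ^ 4))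
  exact e3.trans (congrArg _ e4)

/-! ### Moving the contour -/

/-- Shifting the line of integration of an entire function dominated by a quartic Gaussian on the
strip swept out; Cauchy's theorem on the rectangles `[-N, N] × [0, R]`. -/
lemma integral_shift {f : ℂ → ℂ} (hf : Differentiable ℂ f) {M p : ℝ} (hp : 0 < p) (d R : ℝ)
    (hb : ∀ u b : ℝ, |b| ≤ |R| →
      ‖f (u + b * Complex.I)‖ ≤ M * Real.exp (-p * (u + d) ^ 4)) :
    ∫ u : ℝ, f u = ∫ u : ℝ, f (u + R * Complex.I) := by
  have hfc := hf.continuous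
  have hstrip : ∀ b : ℝ, |b| ≤ |R| → Integrable (fun u : ℝ => f (u + b * Complex.I)) := by
    intro b hbR
    refine (((integrable_exp_quartic hp).comp_add_right d).const_mul M).mono'
      (Continuous.aestronglyMeasurable (by fun_prop))
      (Filter.Eventually.of_forall fun u => hb u b hbR)
  have hI0 : Integrable (fun u : ℝ => f u) := by
    simpa using hstrip 0 (by simp)
  have hIR := hstrip R le_rfl
  have T0 := intervalIntegral_tendsto_integral hI0 Filter.tendsto_neg_atTop_atBot Filter.tendsto_id
  have TR := intervalIntegral_tendsto_integral hIR Filter.tendsto_neg_atTop_atBot Filter.tendsto_id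
  -- the two vertical sides
  have hside : ∀ v : ℝ → ℝ,
      Filter.Tendsto (fun N => Real.exp (-p * (v N + d) ^ 4)) Filter.atTop (nhds 0) →
      Filter.Tendsto (fun N => ∫ b in (0 : ℝ)..R, f (v N + b * Complex.I)) Filter.atTop
        (nhds 0) := by
    intro v hv
    have h1 := (hv.const_mul M).mul_const |R - 0|
    rw [mul_zero, zero_mul] at h1
    refine squeeze_zero_norm (fun N => ?_) h1
    refine intervalIntegral.norm_integral_le_of_norm_le_const fun b hbm => hb _ _ ?_
    have h2 := Set.abs_sub_left_of_mem_uIcc (Set.uIoc_subset_uIcc hbm)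
    simpa using h2
  have S1 := hside (fun N => N) (exp_quartic_tendsto hp d).1
  have S2 := hside (fun N => -N) (exp_quartic_tendsto hp d).2
  have tot := ((T0.sub TR).add (S1.const_smul Complex.I)).sub (S2.const_smul Complex.I)
  have zero : ∀ N : ℝ, (((∫ u in (-N)..N, f u) - ∫ u in (-N)..N, f (u + R * Complex.I)) +
      Complex.I • ∫ b in (0 : ℝ)..R, f (N + b * Complex.I)) -
      Complex.I • ∫ b in (0 : ℝ)..R, f ((-N : ℝ) + b * Complex.I) = 0 := by
    intro N
    have h := Complex.integral_boundary_rect_eq_zero_of_differentiableOn f (-N : ℝ)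
      (N + R * Complex.I) hf.differentiableOn
    simpa using h
  have lim := tendsto_nhds_unique (tot.congr zero) tendsto_const_nhds
  simp only [smul_zero, add_zero, sub_zero] at lim
  exact sub_eq_zero.mp lim

/-- Contour shift in the first variable, with the remaining variables as parameters. -/
lemma integral_shift_prod {E : Type*} [MeasureSpace E] [SFinite (volume : Measure E)]
    {H : ℂ → E → ℂ} (hH : ∀ e, Differentiable ℂ fun a => H a e) {M p : ℝ} (hp : 0 < p)
    (d : E → ℝ) (R : ℝ)
    (hb : ∀ e (u b : ℝ), |b| ≤ |R| →
      ‖H (u + b * Complex.I) e‖ ≤ M * Real.exp (-p * (u + d e) ^ 4))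
    (h0 : Integrable fun w : ℝ × E => H w.1 w.2)
    (hR : Integrable fun w : ℝ × E => H (w.1 + R * Complex.I) w.2) :
    ∫ w : ℝ × E, H w.1 w.2 = ∫ w : ℝ × E, H (w.1 + R * Complex.I) w.2 := by
  have e1 := integral_prod_symm _ h0
  have e2 := integral_prod_symm _ hR
  refine e1.trans (Eq.trans ?_ e2.symm)
  congr 1
  funext e
  exact integral_shift (hH e) hp (d e) R (hb e)

/-! ### The symbol at complex frequencies -/

/-- The symbol `vA` at complex frequencies. -/
noncomputable def vC (A : ℝ) (a b c : ℂ) (s : ℝ) : ℂ := a ^ 2 + (b + A * a * s) ^ 2 + c ^ 2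

/-- The exponent `∫₀ᵗ (v - κ - 4v²)` at complex frequencies, in closed form: it is a polynomial,
hence entire, in each frequency. -/
noncomputable def phaseC (A κ t : ℝ) (a b c : ℂ) : ℂ :=
  (a ^ 2 + b ^ 2 + c ^ 2) * t + A * a * b * t ^ 2 + A ^ 2 * a ^ 2 * t ^ 3 / 3 - κ * t -
    4 * ((a ^ 2 + b ^ 2 + c ^ 2) ^ 2 * t + 2 * A * a * b * (a ^ 2 + b ^ 2 + c ^ 2) * t ^ 2 +
      (4 * A ^ 2 * a ^ 2 * b ^ 2 + 2 * A ^ 2 * a ^ 2 * (a ^ 2 + b ^ 2 + c ^ 2)) * t ^ 3 / 3 +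
      A ^ 3 * a ^ 3 * b * t ^ 4 + A ^ 4 * a ^ 4 * t ^ 5 / 5)

lemma phaseC_eq_integral (A κ t : ℝ) (a b c : ℂ) :
    ∫ s in (0 : ℝ)..t, (vC A a b c s - κ - 4 * vC A a b c s ^ 2) = phaseC A κ t a b c := by
  have hd : ∀ s ∈ Set.uIcc 0 t, HasDerivAt (fun r : ℝ => phaseC A κ r a b c)
      (vC A a b c s - κ - 4 * vC A a b c s ^ 2) s := by
    intro s _
    have h1 : HasDerivAt (fun r : ℝ => (r : ℂ)) 1 s := Complex.ofRealCLM.hasDerivAt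
    have h2 := h1.pow 2
    have h3 := h1.pow 3
    have h4 := h1.pow 4
    have h5 := h1.pow 5
    have := (((((h1.const_mul (a ^ 2 + b ^ 2 + c ^ 2)).add (h2.const_mul (A * a * b))).add
      ((h3.const_mul (A ^ 2 * a ^ 2 : ℂ)).div_const 3)).sub (h1.const_mul (κ : ℂ))).sub
      ((((((h1.const_mul ((a ^ 2 + b ^ 2 + c ^ 2) ^ 2)).add
        (h2.const_mul (2 * A * a * b * (a ^ 2 + b ^ 2 + c ^ 2)))).add
        ((h3.const_mul (4 * A ^ 2 * a ^ 2 * b ^ 2 +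
          2 * A ^ 2 * a ^ 2 * (a ^ 2 + b ^ 2 + c ^ 2) : ℂ)).div_const 3)).add
        (h4.const_mul (A ^ 3 * a ^ 3 * b : ℂ))).add
        ((h5.const_mul (A ^ 4 * a ^ 4 : ℂ)).div_const 5)).const_mul 4))
    refine this.congr_deriv ?_
    unfold vC
    push_cast
    ring
  rw [intervalIntegral.integral_eq_sub_of_hasDerivAt hd
    (Continuous.intervalIntegrable (by unfold vC; fun_prop) _ _)]
  unfold phaseC
  simp

lemma Ghat2_eq (A κ t ξ η ζ : ℝ) :
    (Ghat2 A κ t ξ η ζ : ℂ) = Complex.exp (phaseC A κ t ξ η ζ) := by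
  rw [← phaseC_eq_integral, Ghat2, Complex.ofReal_exp, ← intervalIntegral.integral_ofReal]
  congr 2
  funext s
  unfold vC vA
  push_cast
  ring

/-- The damping rate extracted from the gap `δ = κ - 1/16 - ε`. -/
noncomputable def rate (δ : ℝ) : ℝ := 32 * δ / (1 + 16 * δ)

lemma rate_pos {δ : ℝ} (hδ : 0 < δ) : 0 < rate δ := by unfold rate; positivity

/-- The maximum `1/16` of `V - 4V²`, relaxed by `δ`, still leaves a fixed multiple of `-V²`. In the
application `V = |r|²` and `W = |w|²` for the real and imaginary parts `r`, `w` of the frequency. -/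
lemma scalar_bound {δ : ℝ} (hδ : 0 < δ) (V W : ℝ) :
    V - 4 * V ^ 2 + 24 * V * W ≤ 1 / 16 + δ - rate δ * V ^ 2 + 144 / rate δ * W ^ 2 := by
  have hc := rate_pos hδ
  have h1 : 24 * V * W ≤ rate δ * V ^ 2 + 144 / rate δ * W ^ 2 := by
    have h : rate δ * V ^ 2 + 144 / rate δ * W ^ 2 - 24 * V * W =
        (rate δ * V - 12 * W) ^ 2 / rate δ := by
      field_simp
      ring
    have : 0 ≤ (rate δ * V - 12 * W) ^ 2 / rate δ := by positivity
    linarith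
  have h2 : V - 4 * V ^ 2 ≤ 1 / 16 + δ - 2 * rate δ * V ^ 2 := by
    have h : 1 / 16 + δ - 2 * rate δ * V ^ 2 - (V - 4 * V ^ 2) =
        (8 * V - (1 + 16 * δ)) ^ 2 / (16 * (1 + 16 * δ)) := by
      unfold rate
      field_simp
      ring
    have : 0 ≤ (8 * V - (1 + 16 * δ)) ^ 2 / (16 * (1 + 16 * δ)) := by positivity
    linarith
  linarith

/-- Writing the frequency vector as `r + i w` with `r, w ∈ ℝ³`, one has
`v = |r|² - |w|² + 2i r·w`, and the Cauchy-Schwarz inequality bounds the cross term. -/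
lemma symbol_re_bound {δ : ℝ} (hδ : 0 < δ) (r₁ r₂ r₃ w₁ w₂ w₃ : ℝ) (v : ℂ)
    (hv : v = (r₁ + w₁ * Complex.I) ^ 2 + (r₂ + w₂ * Complex.I) ^ 2 + (r₃ + w₃ * Complex.I) ^ 2) :
    (v - 4 * v ^ 2).re ≤ 1 / 16 + δ - rate δ * (r₁ ^ 4 + r₂ ^ 4 + r₃ ^ 4) +
      144 / rate δ * (w₁ ^ 2 + w₂ ^ 2 + w₃ ^ 2) ^ 2 := by
  set V := r₁ ^ 2 + r₂ ^ 2 + r₃ ^ 2 with hV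
  set W := w₁ ^ 2 + w₂ ^ 2 + w₃ ^ 2 with hW
  have hre : (v - 4 * v ^ 2).re =
      (V - W) - 4 * ((V - W) ^ 2 - 4 * (r₁ * w₁ + r₂ * w₂ + r₃ * w₃) ^ 2) := by
    rw [hv]
    simp [pow_two, hV, hW]
    ring
  have hcs : (r₁ * w₁ + r₂ * w₂ + r₃ * w₃) ^ 2 ≤ V * W := by
    nlinarith [sq_nonneg (r₁ * w₂ - r₂ * w₁), sq_nonneg (r₁ * w₃ - r₃ * w₁),
      sq_nonneg (r₂ * w₃ - r₃ * w₂)]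
  have hW0 : 0 ≤ W := by positivity
  have h := scalar_bound hδ V W
  have hV2 : r₁ ^ 4 + r₂ ^ 4 + r₃ ^ 4 ≤ V ^ 2 := by
    nlinarith [mul_nonneg (sq_nonneg r₁) (sq_nonneg r₂), mul_nonneg (sq_nonneg r₁) (sq_nonneg r₃),
      mul_nonneg (sq_nonneg r₂) (sq_nonneg r₃)]
  have h3 := mul_le_mul_of_nonneg_left hV2 (rate_pos hδ).le
  rw [hre]
  nlinarith [sq_nonneg W]

/-- Along the shear the quartic `∫₀ᵗ (ξ⁴ + (η + Aξs)⁴ + ζ⁴) ds` is coercive in the frequency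
`(ξ, η + Aξt/2, ζ)`. -/
lemma quartic_integral_lower (A ξ η ζ : ℝ) {t : ℝ} (ht : 0 < t) :
    t * (1 + (A * t) ^ 4) / 80 * ξ ^ 4 + t * (η + A * t / 2 * ξ) ^ 4 + t * ζ ^ 4 ≤
      ∫ s in (0 : ℝ)..t, (ξ ^ 4 + (η + A * ξ * s) ^ 4 + ζ ^ 4) := by
  have hd : ∀ s ∈ Set.uIcc 0 t, HasDerivAt (fun r : ℝ => (ξ ^ 4 + ζ ^ 4 + η ^ 4) * r +
      2 * η ^ 3 * (A * ξ) * r ^ 2 + 2 * η ^ 2 * (A * ξ) ^ 2 * r ^ 3 + η * (A * ξ) ^ 3 * r ^ 4 +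
      (A * ξ) ^ 4 / 5 * r ^ 5) (ξ ^ 4 + (η + A * ξ * s) ^ 4 + ζ ^ 4) s := by
    intro s _
    have h1 := hasDerivAt_id' s
    have := (((((h1.const_mul (ξ ^ 4 + ζ ^ 4 + η ^ 4)).add
      ((h1.pow 2).const_mul (2 * η ^ 3 * (A * ξ)))).add
      ((h1.pow 3).const_mul (2 * η ^ 2 * (A * ξ) ^ 2))).add
      ((h1.pow 4).const_mul (η * (A * ξ) ^ 3))).add
      ((h1.pow 5).const_mul ((A * ξ) ^ 4 / 5)))
    refine this.congr_deriv ?_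
    push_cast
    ring
  rw [intervalIntegral.integral_eq_sub_of_hasDerivAt hd
    (Continuous.intervalIntegrable (by fun_prop) _ _)]
  have h0 : 0 ≤ t * ξ ^ 4 * (79 / 80) := by positivity
  have h1 : 0 ≤ t * (η + A * t / 2 * ξ) ^ 2 * (A * ξ * t) ^ 2 / 2 := by positivity
  nlinarith [h0, h1]

lemma sq_sum_bound {t A α β γ s : ℝ} (hs0 : 0 ≤ s) (hst : s ≤ t)
    (hα : t * (1 + (A * t) ^ 4) * α ^ 4 ≤ 1) (hβ : t * β ^ 4 ≤ 1) (hγ : t * γ ^ 4 ≤ 1) :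
    t * (α ^ 2 + (β + A * α * s) ^ 2 + γ ^ 2) ^ 2 ≤ 51 := by
  have ht : 0 ≤ t := hs0.trans hst
  have h4 : s ^ 4 ≤ t ^ 4 := pow_le_pow_left₀ hs0 hst 4
  have e1 : (α ^ 2 + (β + A * α * s) ^ 2 + γ ^ 2) ^ 2 ≤
      3 * (α ^ 4 + 8 * (β ^ 4 + (A * α) ^ 4 * s ^ 4) + γ ^ 4) := by
    have a1 : (β + A * α * s) ^ 4 ≤ 8 * (β ^ 4 + (A * α * s) ^ 4) := by
      nlinarith [sq_nonneg (β - A * α * s), sq_nonneg (β ^ 2 - (A * α * s) ^ 2),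
        sq_nonneg ((β - A * α * s) ^ 2), sq_nonneg (β + A * α * s),
        mul_nonneg (sq_nonneg (β - A * α * s)) (sq_nonneg (β + A * α * s)),
        mul_nonneg (sq_nonneg (β - A * α * s)) (sq_nonneg β),
        mul_nonneg (sq_nonneg (β - A * α * s)) (sq_nonneg (A * α * s))]
    nlinarith [sq_nonneg (α ^ 2 - (β + A * α * s) ^ 2), sq_nonneg (α ^ 2 - γ ^ 2),
      sq_nonneg ((β + A * α * s) ^ 2 - γ ^ 2)]
  have e2 : (A * α) ^ 4 * s ^ 4 ≤ (A * α) ^ 4 * t ^ 4 := by gcongr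
  have e3 := mul_le_mul_of_nonneg_left e1 ht
  have e4 := mul_le_mul_of_nonneg_left e2 ht
  have e5 : 0 ≤ t * α ^ 4 := by positivity
  nlinarith [e3, e4, e5]

/-- The additive loss in the exponent caused by shifting the contour: `144 / rate δ`, the
coefficient in `symbol_re_bound`, times `51`, the bound in `sq_sum_bound`. -/
noncomputable def shiftLoss (δ : ℝ) : ℝ := 7344 / rate δ

/-- The shifts allowed by the hypotheses on `α`, `β`, `γ` cost only a constant, uniformly in `t`;
the factor `1 + (At)⁴` appears because the shear turns a shift `α` of `ξ` into a shift `Aαs`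
of `η + Aξs`. -/
lemma phaseC_re_bound {A κ ε t : ℝ} (ht : 0 < t) (hκ : 1 / 16 + ε < κ) {α β γ : ℝ}
    (hα : t * (1 + (A * t) ^ 4) * α ^ 4 ≤ 1) (hβ : t * β ^ 4 ≤ 1) (hγ : t * γ ^ 4 ≤ 1)
    (ξ η ζ : ℝ) :
    (phaseC A κ t (ξ + α * Complex.I) (η + β * Complex.I) (ζ + γ * Complex.I)).re ≤
      -ε * t + shiftLoss (κ - 1 / 16 - ε) - rate (κ - 1 / 16 - ε) *
        (t * (1 + (A * t) ^ 4) / 80 * ξ ^ 4 + t * (η + A * t / 2 * ξ) ^ 4 + t * ζ ^ 4) := by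
  set δ := κ - 1 / 16 - ε with hδdef
  have hδ : 0 < δ := by linarith
  set a : ℂ := ξ + α * Complex.I
  set b : ℂ := η + β * Complex.I
  set c : ℂ := ζ + γ * Complex.I
  have hcont : Continuous fun s : ℝ => vC A a b c s - κ - 4 * vC A a b c s ^ 2 := by
    unfold vC; fun_prop
  have hre : (phaseC A κ t a b c).re =
      ∫ s in (0 : ℝ)..t, (vC A a b c s - κ - 4 * vC A a b c s ^ 2).re := by
    rw [← phaseC_eq_integral]
    exact (Complex.reCLM.intervalIntegral_comp_comm (hcont.intervalIntegrable 0 t)).symm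
  have hpt : ∀ s ∈ Set.Icc 0 t, (vC A a b c s - κ - 4 * vC A a b c s ^ 2).re ≤
      (-ε + shiftLoss δ / t) - rate δ * (ξ ^ 4 + (η + A * ξ * s) ^ 4 + ζ ^ 4) := by
    intro s hs
    have h1 := symbol_re_bound hδ ξ (η + A * ξ * s) ζ α (β + A * α * s) γ (vC A a b c s) (by
      simp only [vC, a, b, c]
      push_cast
      ring)
    have h2 := sq_sum_bound hs.1 hs.2 hα hβ hγ
    have h3 : 144 / rate δ * (α ^ 2 + (β + A * α * s) ^ 2 + γ ^ 2) ^ 2 ≤ shiftLoss δ / t := by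
      rw [le_div_iff₀ ht]
      have := mul_le_mul_of_nonneg_left h2 (div_pos (by norm_num : (0 : ℝ) < 144) (rate_pos hδ)).le
      have e : shiftLoss δ = 144 / rate δ * 51 := by unfold shiftLoss; ring
      rw [e]
      linarith
    have h4 : (vC A a b c s - κ - 4 * vC A a b c s ^ 2).re =
        (vC A a b c s - 4 * vC A a b c s ^ 2).re - κ := by
      simp only [Complex.sub_re, Complex.ofReal_re]
      ring
    rw [h4]
    linarith
  have hmono := intervalIntegral.integral_mono_on ht.le
    (Continuous.intervalIntegrable (μ := volume) (Complex.continuous_re.comp hcont) 0 t)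
    (Continuous.intervalIntegrable (by fun_prop) 0 t) hpt
  rw [intervalIntegral.integral_sub (by simp) (Continuous.intervalIntegrable (by fun_prop) 0 t),
    intervalIntegral.integral_const_mul, intervalIntegral.integral_const] at hmono
  have hlow := mul_le_mul_of_nonneg_left (quartic_integral_lower A ξ η ζ ht) (rate_pos hδ).le
  have hc : (t - 0) • (-ε + shiftLoss δ / t) = -ε * t + shiftLoss δ := by
    rw [smul_eq_mul]
    field_simp
    ring
  rw [hc] at hmono
  rw [hre]
  exact hmono.trans (by linarith)

/-! ### Decay of the kernel -/

/-- The integrand of `G2` as an entire function of the three frequencies. -/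
noncomputable def kernelC (A κ t x y z : ℝ) (a b c : ℂ) : ℂ :=
  Complex.exp (Complex.I * (x * a + y * b + z * c)) * Complex.exp (phaseC A κ t a b c)

lemma G2_eq (A κ t x y z : ℝ) :
    G2 A κ t x y z = ∫ w : ℝ × ℝ × ℝ, kernelC A κ t x y z w.1 w.2.1 w.2.2 := by
  unfold G2 kernelC
  congr 1
  funext w
  rw [Ghat2_eq]
  push_cast
  rfl

/-- The quartic decay rate of the dominating function in `ξ`. -/
noncomputable def rateX (A δ t : ℝ) : ℝ := rate δ * (t * (1 + (A * t) ^ 4) / 80)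

/-- The quartic decay rate of the dominating function in `η + Aξt/2` and in `ζ`. -/
noncomputable def rateY (δ t : ℝ) : ℝ := rate δ * t

lemma rateX_pos {A δ t : ℝ} (hδ : 0 < δ) (ht : 0 < t) : 0 < rateX A δ t := by
  have := rate_pos hδ
  unfold rateX
  positivity

lemma rateY_pos {δ t : ℝ} (hδ : 0 < δ) (ht : 0 < t) : 0 < rateY δ t :=
  mul_pos (rate_pos hδ) ht

/-- The size of the shifted integrand apart from the plane wave and the quartic Gaussian. -/
noncomputable def amp (κ ε t : ℝ) : ℝ :=
  Real.exp (-ε * t) * Real.exp (shiftLoss (κ - 1 / 16 - ε))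

section Decay

variable {A κ ε t α β γ : ℝ}

lemma kernelC_bound (ht : 0 < t) (hκ : 1 / 16 + ε < κ) (x y z : ℝ)
    (hα : t * (1 + (A * t) ^ 4) * α ^ 4 ≤ 1) (hβ : t * β ^ 4 ≤ 1) (hγ : t * γ ^ 4 ≤ 1)
    (w : ℝ × ℝ × ℝ) :
    ‖kernelC A κ t x y z (w.1 + α * Complex.I) (w.2.1 + β * Complex.I)
        (w.2.2 + γ * Complex.I)‖ ≤
      Real.exp (-(x * α + y * β + z * γ)) * amp κ ε t *
        quarticDom (rateX A (κ - 1 / 16 - ε) t) (rateY (κ - 1 / 16 - ε) t) (A * t / 2) w := by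
  have h := phaseC_re_bound ht hκ hα hβ hγ w.1 w.2.1 w.2.2
  unfold kernelC amp quarticDom rateX rateY
  rw [norm_mul, Complex.norm_exp, Complex.norm_exp, mul_assoc]
  simp only [← Real.exp_add]
  have e : (Complex.I * (x * (w.1 + α * Complex.I) + y * (w.2.1 + β * Complex.I) +
      z * (w.2.2 + γ * Complex.I))).re = -(x * α + y * β + z * γ) := by
    simp
  rw [e]
  apply Real.exp_le_exp.mpr
  linarith

lemma kernelC_continuous (A κ t x y z α β γ : ℝ) :
    Continuous fun w : ℝ × ℝ × ℝ => kernelC A κ t x y z (w.1 + α * Complex.I)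
      (w.2.1 + β * Complex.I) (w.2.2 + γ * Complex.I) := by
  unfold kernelC phaseC
  fun_prop

lemma kernelC_integrable (ht : 0 < t) (hκ : 1 / 16 + ε < κ) (x y z : ℝ)
    (hα : t * (1 + (A * t) ^ 4) * α ^ 4 ≤ 1) (hβ : t * β ^ 4 ≤ 1) (hγ : t * γ ^ 4 ≤ 1) :
    Integrable fun w : ℝ × ℝ × ℝ => kernelC A κ t x y z (w.1 + α * Complex.I)
      (w.2.1 + β * Complex.I) (w.2.2 + γ * Complex.I) := by
  have hδ : 0 < κ - 1 / 16 - ε := by linarith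
  exact ((quarticDom_integrable (rateX_pos hδ ht) (rateY_pos hδ ht) _).const_mul _).mono'
    (kernelC_continuous A κ t x y z α β γ).aestronglyMeasurable
    (Filter.Eventually.of_forall fun w => kernelC_bound ht hκ x y z hα hβ hγ w)

lemma kernelC_integrable_pair (ht : 0 < t) (hκ : 1 / 16 + ε < κ) (x y z : ℝ)
    (hβ : t * β ^ 4 ≤ 1) (hγ : t * γ ^ 4 ≤ 1) (ξ : ℝ) :
    Integrable fun r : ℝ × ℝ => kernelC A κ t x y z ξ
      (r.1 + β * Complex.I) (r.2 + γ * Complex.I) := by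
  have hδ : 0 < κ - 1 / 16 - ε := by linarith
  have hi := ((quarticDom_pair_integrable (rateY_pos hδ ht) (A * t / 2 * ξ)).const_mul
    (Real.exp (-(rateX A (κ - 1 / 16 - ε) t) * ξ ^ 4))).const_mul
    (Real.exp (-(x * 0 + y * β + z * γ)) * amp κ ε t)
  refine hi.mono' (Continuous.aestronglyMeasurable (by unfold kernelC phaseC; fun_prop))
    (Filter.Eventually.of_forall fun r => ?_)
  simpa [quarticDom] using
    kernelC_bound (A := A) (α := 0) ht hκ x y z (by simp) hβ hγ (ξ, r.1, r.2)

/-- The plane wave contributes the real exponential `e^{-(xα + yβ + zγ)}`; the rest is the mass of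
the dominating function. -/
lemma norm_integral_kernelC_le (ht : 0 < t) (hκ : 1 / 16 + ε < κ) (x y z : ℝ)
    (hα : t * (1 + (A * t) ^ 4) * α ^ 4 ≤ 1) (hβ : t * β ^ 4 ≤ 1) (hγ : t * γ ^ 4 ≤ 1) :
    ‖∫ w : ℝ × ℝ × ℝ, kernelC A κ t x y z (w.1 + α * Complex.I)
      (w.2.1 + β * Complex.I) (w.2.2 + γ * Complex.I)‖ ≤
      Real.exp (-(x * α + y * β + z * γ)) * (amp κ ε t *
        ∫ w, quarticDom (rateX A (κ - 1 / 16 - ε) t) (rateY (κ - 1 / 16 - ε) t) (A * t / 2) w) := by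
  have hδ : 0 < κ - 1 / 16 - ε := by linarith
  rw [← mul_assoc, ← integral_const_mul]
  exact norm_integral_le_of_norm_le
    ((quarticDom_integrable (rateX_pos hδ ht) (rateY_pos hδ ht) _).const_mul _)
    (Filter.Eventually.of_forall fun w => kernelC_bound ht hκ x y z hα hβ hγ w)

lemma mul_pow_four_le {k R b : ℝ} (hk : 0 ≤ k) (h : k * R ^ 4 ≤ 1) (hb : |b| ≤ |R|) :
    k * b ^ 4 ≤ 1 := by
  have h1 : b ^ 4 ≤ R ^ 4 := by
    have := pow_le_pow_left₀ (abs_nonneg b) hb 4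
    rwa [Even.pow_abs (by decide), Even.pow_abs (by decide)] at this
  exact (mul_le_mul_of_nonneg_left h1 hk).trans h

/-- A crude bound of the plane wave on the strip swept out by the contour. -/
lemma exp_neg_mul_le {R b : ℝ} (x : ℝ) (hb : |b| ≤ |R|) :
    Real.exp (-(x * b)) ≤ Real.exp (|x| * |R|) := by
  apply Real.exp_le_exp.mpr
  calc -(x * b) ≤ |x * b| := neg_le_abs _
    _ = |x| * |b| := abs_mul _ _
    _ ≤ |x| * |R| := by gcongr

lemma amp_pos (κ ε t : ℝ) : 0 < amp κ ε t := by unfold amp; positivity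

lemma exp_neg_quartic_le_one {q : ℝ} (hq : 0 < q) (u : ℝ) : Real.exp (-q * u ^ 4) ≤ 1 := by
  rw [Real.exp_le_one_iff]
  have : 0 ≤ q * u ^ 4 := by positivity
  linarith

/-- Bounds of the dominating function by each of its three factors. -/
lemma quarticDom_le {p q : ℝ} (hp : 0 < p) (hq : 0 < q) (a : ℝ) (w : ℝ × ℝ × ℝ) :
    quarticDom p q a w ≤ Real.exp (-p * w.1 ^ 4) ∧
    quarticDom p q a w ≤ Real.exp (-q * (w.2.1 + a * w.1) ^ 4) ∧
    quarticDom p q a w ≤ Real.exp (-q * w.2.2 ^ 4) := by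
  have a1 := exp_neg_quartic_le_one hp w.1
  have a2 := exp_neg_quartic_le_one hq (w.2.1 + a * w.1)
  have a3 := exp_neg_quartic_le_one hq w.2.2
  have b1 := Real.exp_pos (-p * w.1 ^ 4)
  have b2 := Real.exp_pos (-q * (w.2.1 + a * w.1) ^ 4)
  have b3 := Real.exp_pos (-q * w.2.2 ^ 4)
  unfold quarticDom
  refine ⟨mul_le_of_le_one_right b1.le (mul_le_one₀ a2 b3.le a3), ?_, ?_⟩
  · exact (mul_le_of_le_one_left (by positivity) a1).trans (mul_le_of_le_one_right b2.le a3)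
  · exact (mul_le_of_le_one_left (by positivity) a1).trans (mul_le_of_le_one_left b3.le a2)

lemma G2_shift_x (ht : 0 < t) (hκ : 1 / 16 + ε < κ) (x y z : ℝ)
    (hα : t * (1 + (A * t) ^ 4) * α ^ 4 ≤ 1) :
    G2 A κ t x y z =
      ∫ w : ℝ × ℝ × ℝ, kernelC A κ t x y z (w.1 + α * Complex.I) w.2.1 w.2.2 := by
  have hδ : 0 < κ - 1 / 16 - ε := by linarith
  have hX := rateX_pos (A := A) hδ ht
  have hY := rateY_pos hδ ht
  rw [G2_eq]
  refine integral_shift_prod (H := fun a (r : ℝ × ℝ) => kernelC A κ t x y z a r.1 r.2)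
    (fun e => by unfold kernelC phaseC; fun_prop) (M := Real.exp (|x| * |α|) * amp κ ε t)
    hX (fun _ => 0) α (fun e u b hb => ?_) ?_ ?_
  · have h := kernelC_bound (β := 0) (γ := 0) ht hκ x y z
      (mul_pow_four_le (by positivity) hα hb) (by simp) (by simp) (u, e)
    simp only [Complex.ofReal_zero, zero_mul, add_zero, mul_zero] at h ⊢
    exact h.trans (mul_le_mul (mul_le_mul_of_nonneg_right (exp_neg_mul_le x hb) (amp_pos _ _ _).le)
      (quarticDom_le hX hY _ _).1 (by unfold quarticDom; positivity)
      (mul_pos (Real.exp_pos _) (amp_pos _ _ _)).le)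
  · simpa using kernelC_integrable (A := A) (α := 0) (β := 0) (γ := 0) ht hκ x y z
      (by simp) (by simp) (by simp)
  · simpa using kernelC_integrable (A := A) (β := 0) (γ := 0) ht hκ x y z hα (by simp) (by simp)

lemma G2_shift_y (ht : 0 < t) (hκ : 1 / 16 + ε < κ) (x y z : ℝ) (hβ : t * β ^ 4 ≤ 1) :
    G2 A κ t x y z =
      ∫ w : ℝ × ℝ × ℝ, kernelC A κ t x y z w.1 (w.2.1 + β * Complex.I) w.2.2 := by
  have hδ : 0 < κ - 1 / 16 - ε := by linarith
  have hX := rateX_pos (A := A) hδ ht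
  have hY := rateY_pos hδ ht
  have i0 := kernelC_integrable (A := A) (α := 0) (β := 0) (γ := 0) ht hκ x y z
      (by simp) (by simp) (by simp)
  have i1 := kernelC_integrable (A := A) (α := 0) (γ := 0) ht hκ x y z (by simp) hβ (by simp)
  simp only [Complex.ofReal_zero, zero_mul, add_zero] at i0 i1
  rw [G2_eq]
  refine (integral_prod _ i0).trans (Eq.trans ?_ (integral_prod _ i1).symm)
  congr 1
  funext ξ
  refine integral_shift_prod (H := fun a (e : ℝ) => kernelC A κ t x y z ξ a e)
    (fun e => by unfold kernelC phaseC; fun_prop) (M := Real.exp (|y| * |β|) * amp κ ε t)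
    hY (fun _ => A * t / 2 * ξ) β (fun e u b hb => ?_) ?_ ?_
  · have h := kernelC_bound (A := A) (α := 0) (γ := 0) ht hκ x y z (by simp)
      (mul_pow_four_le ht.le hβ hb) (by simp) (ξ, u, e)
    simp only [Complex.ofReal_zero, zero_mul, add_zero, mul_zero, zero_add] at h ⊢
    exact h.trans (mul_le_mul (mul_le_mul_of_nonneg_right (exp_neg_mul_le y hb) (amp_pos _ _ _).le)
      (quarticDom_le hX hY _ _).2.1 (by unfold quarticDom; positivity)
      (mul_pos (Real.exp_pos _) (amp_pos _ _ _)).le)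
  · simpa using kernelC_integrable_pair (A := A) (β := 0) (γ := 0) ht hκ x y z
      (by simp) (by simp) ξ
  · simpa using kernelC_integrable_pair (A := A) (γ := 0) ht hκ x y z hβ (by simp) ξ

lemma G2_shift_z (ht : 0 < t) (hκ : 1 / 16 + ε < κ) (x y z : ℝ) (hγ : t * γ ^ 4 ≤ 1) :
    G2 A κ t x y z =
      ∫ w : ℝ × ℝ × ℝ, kernelC A κ t x y z w.1 w.2.1 (w.2.2 + γ * Complex.I) := by
  have hδ : 0 < κ - 1 / 16 - ε := by linarith
  have hX := rateX_pos (A := A) hδ ht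
  have hY := rateY_pos hδ ht
  have i0 := kernelC_integrable (A := A) (α := 0) (β := 0) (γ := 0) ht hκ x y z
      (by simp) (by simp) (by simp)
  have i1 := kernelC_integrable (A := A) (α := 0) (β := 0) ht hκ x y z (by simp) (by simp) hγ
  simp only [Complex.ofReal_zero, zero_mul, add_zero] at i0 i1
  rw [G2_eq]
  refine (integral_prod _ i0).trans (Eq.trans ?_ (integral_prod _ i1).symm)
  congr 1
  funext ξ
  have j0 := kernelC_integrable_pair (A := A) (β := 0) (γ := 0) ht hκ x y z
      (by simp) (by simp) ξ
  have j1 := kernelC_integrable_pair (A := A) (β := 0) ht hκ x y z (by simp) hγ ξ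
  simp only [Complex.ofReal_zero, zero_mul, add_zero] at j0 j1
  refine (integral_prod _ j0).trans (Eq.trans ?_ (integral_prod _ j1).symm)
  congr 1
  funext η
  refine integral_shift (f := fun c => kernelC A κ t x y z ξ η c)
    (by unfold kernelC phaseC; fun_prop) (M := Real.exp (|z| * |γ|) * amp κ ε t)
    hY 0 γ (fun u b hb => ?_)
  have h := kernelC_bound (A := A) (α := 0) (β := 0) ht hκ x y z (by simp) (by simp)
    (mul_pow_four_le ht.le hγ hb) (ξ, η, u)
  simp only [Complex.ofReal_zero, zero_mul, add_zero, mul_zero, zero_add] at h ⊢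
  exact h.trans (mul_le_mul (mul_le_mul_of_nonneg_right (exp_neg_mul_le z hb) (amp_pos _ _ _).le)
    (quarticDom_le hX hY _ _).2.2 (by unfold quarticDom; positivity)
    (mul_pos (Real.exp_pos _) (amp_pos _ _ _)).le)

end Decay

/-- This turns exponential decay `e^{-R|x|}`, which is available for
either sign of `x` by shifting up or down, into polynomial decay. -/
lemma pow_mul_norm_le {x R B : ℝ} {g : ℂ} (hR : 0 < R) (hB : 0 ≤ B)
    (hg : ∀ r : ℝ, |r| = R → ‖g‖ ≤ Real.exp (-(x * r)) * B) (m : ℕ) :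
    ‖(x : ℂ) ^ (2 * m) * g‖ ≤ (2 * m).factorial * B * (R ^ (2 * m))⁻¹ := by
  have h1 : ‖g‖ ≤ Real.exp (-(|x| * R)) * B := by
    rcases le_total 0 x with hx | hx
    · simpa [abs_of_nonneg hx] using hg R (abs_of_pos hR)
    · simpa [abs_of_nonpos hx] using hg (-R) (by rw [abs_neg, abs_of_pos hR])
  have h2 := Real.pow_div_factorial_le_exp (|x| * R) (by positivity) (2 * m)
  rw [div_le_iff₀ (by positivity), mul_pow] at h2
  rw [norm_mul, norm_pow, Complex.norm_real, Real.norm_eq_abs]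
  calc |x| ^ (2 * m) * ‖g‖ ≤ |x| ^ (2 * m) * (Real.exp (-(|x| * R)) * B) := by gcongr
    _ = (|x| ^ (2 * m) * R ^ (2 * m)) * (Real.exp (-(|x| * R)) * B) * (R ^ (2 * m))⁻¹ := by
        field_simp
    _ ≤ (Real.exp (|x| * R) * (2 * m).factorial) * (Real.exp (-(|x| * R)) * B) *
          (R ^ (2 * m))⁻¹ := by gcongr
    _ = _ := by
        rw [Real.exp_neg]
        field_simp

lemma rpow_shift_pow {k : ℝ} (hk : 0 < k) (m : ℕ) :
    ((k ^ (-(1 / 4) : ℝ)) ^ (2 * m))⁻¹ = k ^ ((m : ℝ) / 2) := by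
  rw [← Real.rpow_natCast, ← Real.rpow_mul hk.le, ← Real.rpow_neg hk.le]
  congr 1
  push_cast
  ring

lemma rpow_shift_four {k r : ℝ} (hk : 0 < k) (hr : |r| = k ^ (-(1 / 4) : ℝ)) :
    k * r ^ 4 ≤ 1 := by
  rw [← Even.pow_abs (by decide : Even 4), hr, Real.rpow_neg hk.le, inv_pow, rpow_quarter_pow hk,
    mul_inv_cancel₀ hk.ne']

/-- The time-independent constant in the dominating mass, including the loss from the shift. -/
noncomputable def massConst (δ : ℝ) : ℝ :=
  Real.exp (shiftLoss δ) * ((rate δ / 80) ^ (-(1 / 4) : ℝ) * (rate δ) ^ (-(1 / 4) : ℝ) *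
    (rate δ) ^ (-(1 / 4) : ℝ) * quarticMass ^ 3)

lemma massConst_pos {δ : ℝ} (hδ : 0 < δ) : 0 < massConst δ := by
  have := rate_pos hδ
  have := quarticMass_pos
  unfold massConst
  positivity

lemma amp_mul_mass {A κ ε t : ℝ} (ht : 0 < t) (hκ : 1 / 16 + ε < κ) :
    amp κ ε t *
        ∫ w, quarticDom (rateX A (κ - 1 / 16 - ε) t) (rateY (κ - 1 / 16 - ε) t) (A * t / 2) w =
      massConst (κ - 1 / 16 - ε) * Real.exp (-ε * t) * t ^ (-(3:ℝ)/4) *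
        (1 + (A * t) ^ 4) ^ (-(1:ℝ)/4) := by
  have hδ : 0 < κ - 1 / 16 - ε := by linarith
  have hr := rate_pos hδ
  have hL : 0 < 1 + (A * t) ^ 4 := by positivity
  have et : t ^ (-(3:ℝ)/4) = t ^ (-(1 / 4) : ℝ) * t ^ (-(1 / 4) : ℝ) * t ^ (-(1 / 4) : ℝ) := by
    rw [← Real.rpow_add ht, ← Real.rpow_add ht]
    norm_num
  have eX : rateX A (κ - 1 / 16 - ε) t = rate (κ - 1 / 16 - ε) / 80 * t * (1 + (A * t) ^ 4) := by
    unfold rateX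
    ring
  rw [quarticDom_integral (rateX_pos hδ ht) (rateY_pos hδ ht), et, eX, rateY,
    Real.mul_rpow (by positivity) hL.le, Real.mul_rpow (by positivity) ht.le,
    Real.mul_rpow hr.le ht.le, neg_div, massConst, amp]
  ring

/-- For every integer `0 ≤ m ≤ 3` there is `C > 0` such that for all `t > 0`
and `(x, y, z) ∈ ℝ³`:
`|x^{2m} G₂(t,x,y,z)| ≤ C e^{-εt} t^{-3/4} (1+(At)⁴)^{-1/4} · t^{m/2} (1+(At)⁴)^{m/2}` and
`|y^{2m} G₂(t,x,y,z)| + |z^{2m} G₂(t,x,y,z)| ≤ C e^{-εt} t^{-3/4} (1+(At)⁴)^{-1/4} · t^{m/2}`. -/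
theorem stmt_9 (A κ ε : ℝ) (hA : 0 < A) (hκ0 : 0 < κ) (hε : 0 < ε)
    (hκ : 1 / 16 + ε < κ) :
    ∀ m : ℕ, m ≤ 3 → ∃ C : ℝ, 0 < C ∧ ∀ t x y z : ℝ, 0 < t →
      (‖(x : ℂ) ^ (2 * m) * G2 A κ t x y z‖ ≤
          C * Real.exp (-ε * t) * t ^ (-(3:ℝ)/4) * (1 + (A * t) ^ 4) ^ (-(1:ℝ)/4) *
            (t ^ ((m : ℝ)/2) * (1 + (A * t) ^ 4) ^ ((m : ℝ)/2))) ∧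
      (‖(y : ℂ) ^ (2 * m) * G2 A κ t x y z‖ + ‖(z : ℂ) ^ (2 * m) * G2 A κ t x y z‖ ≤
          C * Real.exp (-ε * t) * t ^ (-(3:ℝ)/4) * (1 + (A * t) ^ 4) ^ (-(1:ℝ)/4) *
            t ^ ((m : ℝ)/2)) := by
  intro m _
  have hδ : 0 < κ - 1 / 16 - ε := by linarith
  have hC := massConst_pos hδ
  refine ⟨2 * ((2 * m).factorial * massConst (κ - 1 / 16 - ε)), by positivity, ?_⟩
  intro t x y z ht
  have hL : 0 < 1 + (A * t) ^ 4 := by positivity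
  have hk : 0 < t * (1 + (A * t) ^ 4) := by positivity
  have hmass := amp_mul_mass (A := A) ht hκ
  set B := massConst (κ - 1 / 16 - ε) * Real.exp (-ε * t) * t ^ (-(3:ℝ)/4) *
    (1 + (A * t) ^ 4) ^ (-(1:ℝ)/4) with hB
  have hB0 : 0 ≤ B := by positivity
  have bx := pow_mul_norm_le (x := x) (g := G2 A κ t x y z) (Real.rpow_pos_of_pos hk (-(1 / 4)))
    hB0 (fun r hr => by
      have hr' := rpow_shift_four hk hr
      rw [G2_shift_x ht hκ x y z hr', ← hmass]
      simpa using norm_integral_kernelC_le (β := 0) (γ := 0) ht hκ x y z hr' (by simp) (by simp)) m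
  have bY := pow_mul_norm_le (x := y) (g := G2 A κ t x y z) (Real.rpow_pos_of_pos ht (-(1 / 4)))
    hB0 (fun r hr => by
      have hr' := rpow_shift_four ht hr
      rw [G2_shift_y ht hκ x y z hr', ← hmass]
      simpa using norm_integral_kernelC_le (A := A) (α := 0) (γ := 0) ht hκ x y z
        (by simp) hr' (by simp)) m
  have bz := pow_mul_norm_le (x := z) (g := G2 A κ t x y z) (Real.rpow_pos_of_pos ht (-(1 / 4)))
    hB0 (fun r hr => by
      have hr' := rpow_shift_four ht hr
      rw [G2_shift_z ht hκ x y z hr', ← hmass]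
      simpa using norm_integral_kernelC_le (A := A) (α := 0) (β := 0) ht hκ x y z
        (by simp) (by simp) hr') m
  rw [rpow_shift_pow hk, Real.mul_rpow ht.le hL.le] at bx
  rw [rpow_shift_pow ht] at bY bz
  constructor
  · refine bx.trans ?_
    have : 0 ≤ (2 * m).factorial * B *
        (t ^ ((m : ℝ) / 2) * (1 + (A * t) ^ 4) ^ ((m : ℝ) / 2)) := by positivity
    rw [hB] at this ⊢
    linarith
  · refine (add_le_add bY bz).trans (le_of_eq ?_)
    rw [hB]
    ring
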